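/- Let T be a decision tree for a training set (E, λ). For a node v of T, let s_v be the number of inner nodes of the subtree T_v rooted at v, let t_v = min(|{e ∈ E[T,v] : λ(e)=blue}|, |{e ∈ E[T,v] : λ(e)=red}|), and for 0 ≤ k' ≤ s_v let opt(v,k') be the minimum, over all trees obtained from T_v by sequences of subtree replacement operations pruning exactly k' inner nodes in total, of the number of examples of E[T,v] misclassified by the resulting tree (examples of E[T,v] being routed from the root of the resulting tree). Then: (i) if v is a leaf, opt(v,0) equals the number of examples of E[T,v] whose label differs from the label of v; (ii) if v is an inner node with left child u and right child w, then opt(v, s_v) = t_v, and for every 0 ≤ k' < s_v, opt(v,k') = min over all k* with 0 ≤ k* ≤ k', k* ≤ s_u and k'−k* ≤ s_w of opt(u,k*) + opt(w,k'−k*). -/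

import Mathlib

/-- The two class labels. -/
inductive Label where
  | blue
  | red
deriving DecidableEq

/-- A decision tree over examples `ι → ℝ` with classes `{blue, red}`:
every inner node carries a feature and a threshold, every leaf a class label.
An example goes to the left child if its value in the node's feature is at most
the threshold, and to the right child otherwise. -/
inductive DTree (ι : Type) where
  | leaf (c : Label)
  | node (feat : ι) (thr : ℝ) (left right : DTree ι)

namespace DTree

variable {ι : Type}

/-- The class that a decision tree assigns to an example. -/
noncomputable def classify : DTree ι → (ι → ℝ) → Label
  | .leaf c, _ => c
  | .node f t l r, e => if e f ≤ t then l.classify e else r.classify e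

/-- The routing path of an example (`false` = left child, `true` = right child);
it is the position of the leaf of the example. -/
noncomputable def route : DTree ι → (ι → ℝ) → List Bool
  | .leaf _, _ => []
  | .node f t l r, e => if e f ≤ t then false :: l.route e else true :: r.route e

/-- The subtree rooted at a position (`none` if the position is not a node). -/
def subtreeAt : DTree ι → List Bool → Option (DTree ι)
  | T, [] => some T
  | .leaf _, _ :: _ => none
  | .node _ _ l r, b :: p => (if b then r else l).subtreeAt p

/-- Replace the subtree at a given position by another tree. -/
def replaceAt : DTree ι → List Bool → DTree ι → DTree ι
  | _, [], T' => T'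
  | .leaf c, _ :: _, _ => .leaf c
  | .node f t l r, b :: p, T' =>
      if b then .node f t l (r.replaceAt p T') else .node f t (l.replaceAt p T') r

/-- The number of inner nodes of a decision tree. -/
def innerCount : DTree ι → ℕ
  | .leaf _ => 0
  | .node _ _ l r => 1 + l.innerCount + r.innerCount

/-- The position `p` is an inner node of `T`. -/
def IsInnerPos (T : DTree ι) (p : List Bool) : Prop :=
  ∃ f t l r, T.subtreeAt p = some (.node f t l r)

/-- The position `p` is a node of `T`. -/
def IsNodePos (T : DTree ι) (p : List Bool) : Prop :=
  (T.subtreeAt p).isSome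

/-- The feature and threshold of the inner node at position `p`. -/
def cutAt (T : DTree ι) (p : List Bool) : Option (ι × ℝ) :=
  match T.subtreeAt p with
  | some (.node f t _ _) => some (f, t)
  | _ => none

/-- The subtree raising operation at position `q` keeping the child in direction `b`:
the subtree rooted at `q` is replaced by the subtree rooted at its `b`-child; it prunes
the node at `q` together with all inner nodes of the subtree rooted at the other child. -/
def raiseAt (T : DTree ι) (q : List Bool) (b : Bool) : DTree ι :=
  match T.subtreeAt q with
  | some (.node _ _ l r) => T.replaceAt q (if b then r else l)
  | _ => T

end DTree

/-- `E[T,p]`: the examples of `E` whose routing through `T` passes the position `p`. -/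
noncomputable def reach {ι : Type} (E : Finset (ι → ℝ)) (T : DTree ι) (p : List Bool) :
    Finset (ι → ℝ) :=
  E.filter fun e => p <+: T.route e

/-- The number of errors of `T` on the training set `(E, lab)`. -/
noncomputable def errCount {ι : Type} (T : DTree ι) (E : Finset (ι → ℝ))
    (lab : (ι → ℝ) → Label) : ℕ :=
  (E.filter fun e => T.classify e ≠ lab e).card

/-- A most frequent label of the labeled set `(E, lab)` (blue in case of a tie). -/
def majorityLabel {ι : Type} (E : Finset (ι → ℝ)) (lab : (ι → ℝ) → Label) : Label :=
  if (E.filter fun e => lab e = Label.red).card ≤ (E.filter fun e => lab e = Label.blue).card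
  then Label.blue else Label.red

/-- One subtree replacement operation: some inner node of `T` is replaced by a leaf
labeled with a most frequent label of the examples reaching it. -/
def ReplStep {ι : Type} (E : Finset (ι → ℝ)) (lab : (ι → ℝ) → Label)
    (T T' : DTree ι) : Prop :=
  ∃ p, T.IsInnerPos p ∧
    T' = T.replaceAt p (.leaf (majorityLabel (reach E T p) lab))

/-- `T` is a reasonable decision tree for `(E, lab)`: every node is reached by some
example and every leaf carries a most frequent label of the examples reaching it. -/
def Reasonable {ι : Type} (E : Finset (ι → ℝ)) (lab : (ι → ℝ) → Label)
    (T : DTree ι) : Prop :=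
  (∀ p, T.IsNodePos p → (reach E T p).Nonempty) ∧
  (∀ p c, T.subtreeAt p = some (.leaf c) → ∀ c' : Label,
    ((reach E T p).filter fun e => lab e = c').card ≤
      ((reach E T p).filter fun e => lab e = c).card)

/-- Apply a sequence of raising operations (given by positions and kept directions). -/
def applySeq {ι : Type} : DTree ι → List (List Bool × Bool) → DTree ι
  | T, [] => T
  | T, (q, b) :: rest => applySeq (T.raiseAt q b) rest

/-- Each raising operation of the sequence is applied at an inner node. -/
def ValidSeq {ι : Type} : DTree ι → List (List Bool × Bool) → Prop
  | _, [] => True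
  | T, (q, b) :: rest => T.IsInnerPos q ∧ ValidSeq (T.raiseAt q b) rest

/-- The total number of inner nodes pruned by a sequence of raising operations. -/
def seqPruned {ι : Type} : DTree ι → List (List Bool × Bool) → ℕ
  | _, [] => 0
  | T, (q, b) :: rest =>
      (match T.subtreeAt q with
        | some (.node _ _ l r) => 1 + DTree.innerCount (if b then l else r)
        | _ => 0) + seqPruned (T.raiseAt q b) rest

/-- `T'` is obtained from `T` by a (possibly empty) sequence of subtree raising
operations. -/
def RaisedFrom {ι : Type} (T T' : DTree ι) : Prop :=
  ∃ steps, ValidSeq T steps ∧ applySeq T steps = T'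

/-- `T'` is obtained from `T` by a sequence of subtree raising operations pruning
exactly `m` inner nodes in total. -/
def RaisedFromPruning {ι : Type} (T : DTree ι) (m : ℕ) (T' : DTree ι) : Prop :=
  ∃ steps, ValidSeq T steps ∧ seqPruned T steps = m ∧ applySeq T steps = T'

/-- Tracking the position of a node through one raising operation: nodes strictly
below the raised node on the discarded side, and the raised node itself, are pruned
(`none`); all other nodes survive at a possibly shifted position. -/
def stepMap (q : List Bool) (b : Bool) (p : List Bool) : Option (List Bool) :=
  if q <+: p then
    if q ++ [b] <+: p then some (q ++ p.drop (q.length + 1)) else none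
  else some p

/-- Tracking the position of a node through a sequence of raising operations. -/
def seqMap : List (List Bool × Bool) → List Bool → Option (List Bool)
  | [], p => some p
  | (q, b) :: rest, p => (stepMap q b p).bind (seqMap rest)

/-- The number of errors of `T` on a multiset of labeled examples. -/
noncomputable def errCountM {ι : Type} (T : DTree ι) (E : Multiset ((ι → ℝ) × Label)) : ℕ :=
  (E.filter fun q => T.classify q.1 ≠ q.2).card

/-- A sequence of subtree replacement operations pruning a given total number of
inner nodes (each operation prunes all inner nodes of the replaced subtree; the
label of each new leaf is a most frequent label of the examples reaching the
replaced node). -/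
inductive ReplSeqN {d : ℕ} (E : Finset (Fin d → ℝ)) (lab : (Fin d → ℝ) → Label) :
    DTree (Fin d) → ℕ → DTree (Fin d) → Prop
  | refl (T : DTree (Fin d)) : ReplSeqN E lab T 0 T
  | step {T T'' : DTree (Fin d)} {k : ℕ} (p : List Bool) (f : Fin d) (t : ℝ)
      (l r : DTree (Fin d)) :
      T.subtreeAt p = some (.node f t l r) →
      ReplSeqN E lab (T.replaceAt p (.leaf (majorityLabel (reach E T p) lab))) k T'' →
      ReplSeqN E lab T ((DTree.node f t l r).innerCount + k) T''

/-- `optRepl E lab T k`: the minimum number of errors on `(E, lab)` of a tree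
obtained from `T` by subtree replacement operations pruning exactly `k` inner
nodes in total. -/
noncomputable def optRepl {d : ℕ} (E : Finset (Fin d → ℝ)) (lab : (Fin d → ℝ) → Label)
    (T : DTree (Fin d)) (k : ℕ) : ℕ :=
  sInf {x | ∃ T', ReplSeqN E lab T k T' ∧ errCount T' E lab = x}

namespace DTree

variable {ι : Type}

theorem concat_false_prefix_route {T : DTree ι} {v : List Bool} {f : ι} {t : ℝ}
    {u w : DTree ι} (h : T.subtreeAt v = some (.node f t u w)) (e : ι → ℝ) :
    v ++ [false] <+: T.route e ↔ v <+: T.route e ∧ e f ≤ t := by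
  induction v generalizing T with
  | nil =>
    simp only [subtreeAt, Option.some.injEq] at h
    subst h
    by_cases hf : e f ≤ t <;> simp [route, hf]
  | cons b p ih =>
    cases T with
    | leaf c => simp [subtreeAt] at h
    | node f₀ t₀ l r =>
      have ih := ih h
      cases b <;> by_cases hf : e f₀ ≤ t₀ <;> simp_all [route, -not_le]

theorem concat_true_prefix_route {T : DTree ι} {v : List Bool} {f : ι} {t : ℝ}
    {u w : DTree ι} (h : T.subtreeAt v = some (.node f t u w)) (e : ι → ℝ) :
    v ++ [true] <+: T.route e ↔ v <+: T.route e ∧ ¬ e f ≤ t := by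
  induction v generalizing T with
  | nil =>
    simp only [subtreeAt, Option.some.injEq] at h
    subst h
    by_cases hf : e f ≤ t <;> simp [route, hf]
  | cons b p ih =>
    cases T with
    | leaf c => simp [subtreeAt] at h
    | node f₀ t₀ l r =>
      have ih := ih h
      cases b <;> by_cases hf : e f₀ ≤ t₀ <;> simp_all [route, -not_le]

theorem innerCount_replaceAt_leaf {T S : DTree ι} {p : List Bool}
    (h : T.subtreeAt p = some S) (c : Label) :
    S.innerCount + (T.replaceAt p (.leaf c)).innerCount = T.innerCount := by
  induction p generalizing T with
  | nil =>
    simp only [subtreeAt, Option.some.injEq] at h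
    subst h
    simp [replaceAt, innerCount]
  | cons b p ih =>
    cases T with
    | leaf c => simp [subtreeAt] at h
    | node f t l r =>
      have ih := ih h
      cases b <;> simp [replaceAt, innerCount] at ih ⊢ <;> omega

end DTree

section Reach

variable {ι : Type} (E : Finset (ι → ℝ)) (lab : (ι → ℝ) → Label)

theorem reach_nil (T : DTree ι) : reach E T [] = E := by
  simp [reach]

theorem reach_concat_false {T : DTree ι} {v : List Bool} {f : ι} {t : ℝ} {u w : DTree ι}
    (h : T.subtreeAt v = some (.node f t u w)) :
    reach E T (v ++ [false]) = (reach E T v).filter fun e => e f ≤ t := by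
  simp only [reach, DTree.concat_false_prefix_route h, Finset.filter_filter]

theorem reach_concat_true {T : DTree ι} {v : List Bool} {f : ι} {t : ℝ} {u w : DTree ι}
    (h : T.subtreeAt v = some (.node f t u w)) :
    reach E T (v ++ [true]) = (reach E T v).filter fun e => ¬ e f ≤ t := by
  simp only [reach, DTree.concat_true_prefix_route h, Finset.filter_filter]

theorem reach_node_cons_false (f : ι) (t : ℝ) (u w : DTree ι) (p : List Bool) :
    reach E (.node f t u w) (false :: p) = reach (E.filter fun e => e f ≤ t) u p := by
  ext e
  simp only [reach, Finset.mem_filter]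
  by_cases hf : e f ≤ t <;> simp [DTree.route, hf, -not_le]

theorem reach_node_cons_true (f : ι) (t : ℝ) (u w : DTree ι) (p : List Bool) :
    reach E (.node f t u w) (true :: p) = reach (E.filter fun e => ¬ e f ≤ t) w p := by
  ext e
  simp only [reach, Finset.mem_filter]
  by_cases hf : e f ≤ t <;> simp [DTree.route, hf, -not_le]

theorem errCount_node (f : ι) (t : ℝ) (u w : DTree ι) :
    errCount (.node f t u w) E lab
      = errCount u (E.filter fun e => e f ≤ t) lab
        + errCount w (E.filter fun e => ¬ e f ≤ t) lab := by
  unfold errCount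
  rw [← Finset.card_filter_add_card_filter_not (s := E.filter _) (fun e => e f ≤ t)]
  simp only [Finset.filter_filter]
  congr 2 <;> ext e <;> simp only [Finset.mem_filter] <;>
    by_cases hf : e f ≤ t <;> simp [DTree.classify, hf, -not_le]

theorem errCount_leaf (c : Label) :
    errCount (.leaf c) E lab = (E.filter fun e => lab e ≠ c).card := by
  exact congrArg Finset.card (Finset.filter_congr fun e _ => ne_comm)

theorem errCount_leaf_majorityLabel :
    errCount (.leaf (majorityLabel E lab)) E lab
      = min (E.filter fun e => lab e = Label.blue).card
          (E.filter fun e => lab e = Label.red).card := by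
  have hb : ∀ e, lab e ≠ Label.blue ↔ lab e = Label.red := fun e => by cases lab e <;> simp
  have hr : ∀ e, lab e ≠ Label.red ↔ lab e = Label.blue := fun e => by cases lab e <;> simp
  rw [errCount_leaf, majorityLabel]
  split_ifs with h
  · simp only [hb, min_eq_right h]
  · simp only [hr, min_eq_left (not_le.mp h).le]

end Reach

section Replacement

variable {d : ℕ} {E : Finset (Fin d → ℝ)} {lab : (Fin d → ℝ) → Label}

namespace ReplSeqN

theorem add_innerCount {T T' : DTree (Fin d)} {k : ℕ} (h : ReplSeqN E lab T k T') :
    k + T'.innerCount = T.innerCount := by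
  induction h with
  | refl T => simp
  | step p f t l r hp _ ih =>
    rw [add_assoc, ih, DTree.innerCount_replaceAt_leaf hp]

theorem of_leaf {c : Label} {T' : DTree (Fin d)} {k : ℕ}
    (h : ReplSeqN E lab (.leaf c) k T') : k = 0 ∧ T' = .leaf c := by
  cases h with
  | refl => exact ⟨rfl, rfl⟩
  | step p f t l r hp _ => cases p <;> simp [DTree.subtreeAt] at hp

theorem root (E : Finset (Fin d → ℝ)) (lab : (Fin d → ℝ) → Label) (f : Fin d) (t : ℝ)
    (u w : DTree (Fin d)) :
    ReplSeqN E lab (.node f t u w) (DTree.node f t u w).innerCount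
      (.leaf (majorityLabel E lab)) := by
  have h := ReplSeqN.step (E := E) (lab := lab) [] f t u w rfl (ReplSeqN.refl _)
  simpa only [reach_nil, DTree.replaceAt, add_zero] using h

theorem trans {T T' T'' : DTree (Fin d)} {k k' : ℕ} (h : ReplSeqN E lab T k T')
    (h' : ReplSeqN E lab T' k' T'') : ReplSeqN E lab T (k + k') T'' := by
  induction h with
  | refl T => simpa using h'
  | step p f t l r hp _ ih =>
    rw [add_assoc]
    exact .step p f t l r hp (ih h')

theorem node_left {f : Fin d} {t : ℝ} {u u' : DTree (Fin d)} {k : ℕ} (w : DTree (Fin d))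
    (h : ReplSeqN (E.filter fun e => e f ≤ t) lab u k u') :
    ReplSeqN E lab (.node f t u w) k (.node f t u' w) := by
  induction h with
  | refl u => exact .refl _
  | step p f₀ t₀ l r hp _ ih =>
    refine .step (false :: p) f₀ t₀ l r hp ?_
    rw [reach_node_cons_false]
    exact ih

theorem node_right {f : Fin d} {t : ℝ} {w w' : DTree (Fin d)} {k : ℕ} (u : DTree (Fin d))
    (h : ReplSeqN (E.filter fun e => ¬ e f ≤ t) lab w k w') :
    ReplSeqN E lab (.node f t u w) k (.node f t u w') := by
  induction h with
  | refl w => exact .refl _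
  | step p f₀ t₀ l r hp _ ih =>
    refine .step (true :: p) f₀ t₀ l r hp ?_
    rw [reach_node_cons_true]
    exact ih

/-- A replacement sequence on an inner node either replaces its root at some point, or acts
independently on the two subtrees. -/
theorem of_node {f : Fin d} {t : ℝ} {u w T' : DTree (Fin d)} {k : ℕ}
    (h : ReplSeqN E lab (.node f t u w) k T') :
    (k = (DTree.node f t u w).innerCount ∧ T' = .leaf (majorityLabel E lab)) ∨
    ∃ i j u' w', k = i + j ∧ T' = .node f t u' w' ∧
      ReplSeqN (E.filter fun e => e f ≤ t) lab u i u' ∧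
      ReplSeqN (E.filter fun e => ¬ e f ≤ t) lab w j w' := by
  generalize hS : DTree.node f t u w = S at h
  induction h generalizing u w with
  | refl T =>
    subst hS
    exact .inr ⟨0, 0, u, w, rfl, rfl, .refl _, .refl _⟩
  | @step T T'' k p f₀ t₀ l r hp hrest ih =>
    subst hS
    rcases p with _ | ⟨_ | _, p⟩
    · simp only [DTree.subtreeAt, Option.some.injEq] at hp
      rw [reach_nil, DTree.replaceAt] at hrest
      obtain ⟨rfl, rfl⟩ := hrest.of_leaf
      exact .inl ⟨by rw [hp, add_zero], rfl⟩
    · have hcount := DTree.innerCount_replaceAt_leaf hp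
        (majorityLabel (reach E (.node f t u w) (false :: p)) lab)
      rcases ih rfl with ⟨hk, hT⟩ | ⟨i, j, u', w', hk, hT, hu, hw⟩
      · refine .inl ⟨?_, hT⟩
        rw [hk, ← hcount]
      · refine .inr ⟨_ + i, j, u', w', by rw [hk, ← add_assoc], hT, .step p f₀ t₀ l r hp ?_, hw⟩
        rwa [reach_node_cons_false] at hu
    · have hcount := DTree.innerCount_replaceAt_leaf hp
        (majorityLabel (reach E (.node f t u w) (true :: p)) lab)
      rcases ih rfl with ⟨hk, hT⟩ | ⟨i, j, u', w', hk, hT, hu, hw⟩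
      · refine .inl ⟨?_, hT⟩
        rw [hk, ← hcount]
      · refine .inr ⟨i, _ + j, u', w', by rw [hk, add_left_comm], hT, hu,
          .step p f₀ t₀ l r hp ?_⟩
        rwa [reach_node_cons_true] at hw

theorem exists_of_le (E : Finset (Fin d → ℝ)) (lab : (Fin d → ℝ) → Label)
    (T : DTree (Fin d)) {k : ℕ} (hk : k ≤ T.innerCount) : ∃ T', ReplSeqN E lab T k T' := by
  induction T generalizing E k with
  | leaf c =>
    obtain rfl : k = 0 := Nat.le_zero.mp hk
    exact ⟨_, .refl _⟩
  | node f t u w ihu ihw =>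
    rcases hk.eq_or_lt with rfl | hlt
    · exact ⟨_, root E lab f t u w⟩
    · rw [DTree.innerCount] at hlt
      obtain ⟨u', hu⟩ := ihu (E.filter fun e => e f ≤ t) (min_le_right k u.innerCount)
      obtain ⟨w', hw⟩ := ihw (E.filter fun e => ¬ e f ≤ t)
        (k := k - min k u.innerCount) (by omega)
      have h := (hu.node_left w).trans (hw.node_right u')
      rw [Nat.add_sub_cancel' (min_le_left _ _)] at h
      exact ⟨_, h⟩

theorem optRepl_le {T T' : DTree (Fin d)} {k : ℕ} (h : ReplSeqN E lab T k T') :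
    optRepl E lab T k ≤ errCount T' E lab :=
  Nat.sInf_le ⟨T', h, rfl⟩

end ReplSeqN

theorem exists_errCount_eq_optRepl (E : Finset (Fin d → ℝ)) (lab : (Fin d → ℝ) → Label)
    (T : DTree (Fin d)) {k : ℕ} (hk : k ≤ T.innerCount) :
    ∃ T', ReplSeqN E lab T k T' ∧ errCount T' E lab = optRepl E lab T k := by
  obtain ⟨T', h⟩ := ReplSeqN.exists_of_le E lab T hk
  exact Nat.sInf_mem (s := {x | ∃ T', ReplSeqN E lab T k T' ∧ errCount T' E lab = x})
    ⟨_, T', h, rfl⟩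

theorem optRepl_leaf (E : Finset (Fin d → ℝ)) (lab : (Fin d → ℝ) → Label) (c : Label) :
    optRepl E lab (.leaf c) 0 = (E.filter fun e => lab e ≠ c).card := by
  obtain ⟨T', h, hopt⟩ := exists_errCount_eq_optRepl E lab (.leaf c) (Nat.zero_le _)
  rw [← hopt, h.of_leaf.2, errCount_leaf]

theorem optRepl_node_innerCount (E : Finset (Fin d → ℝ)) (lab : (Fin d → ℝ) → Label)
    (f : Fin d) (t : ℝ) (u w : DTree (Fin d)) :
    optRepl E lab (.node f t u w) (DTree.node f t u w).innerCount
      = min (E.filter fun e => lab e = Label.blue).card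
          (E.filter fun e => lab e = Label.red).card := by
  obtain ⟨T', h, hopt⟩ := exists_errCount_eq_optRepl E lab (.node f t u w) le_rfl
  rw [← hopt]
  rcases h.of_node with ⟨-, rfl⟩ | ⟨i, j, u', w', -, rfl, -, -⟩
  · exact errCount_leaf_majorityLabel E lab
  · have := h.add_innerCount
    simp only [DTree.innerCount] at this
    omega

theorem optRepl_node_of_lt (E : Finset (Fin d → ℝ)) (lab : (Fin d → ℝ) → Label)
    (f : Fin d) (t : ℝ) (u w : DTree (Fin d)) {k : ℕ}
    (hk : k < (DTree.node f t u w).innerCount) :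
    optRepl E lab (.node f t u w) k
      = sInf {x | ∃ i, i ≤ k ∧ i ≤ u.innerCount ∧ k - i ≤ w.innerCount ∧
          x = optRepl (E.filter fun e => e f ≤ t) lab u i
            + optRepl (E.filter fun e => ¬ e f ≤ t) lab w (k - i)} := by
  apply le_antisymm
  · rw [DTree.innerCount] at hk
    refine le_csInf ⟨_, min k u.innerCount, min_le_left _ _, min_le_right _ _, by omega, rfl⟩ ?_
    rintro x ⟨i, hik, hiu, hiw, rfl⟩
    obtain ⟨u', hu, hu_opt⟩ := exists_errCount_eq_optRepl (E.filter fun e => e f ≤ t) lab u hiu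
    obtain ⟨w', hw, hw_opt⟩ :=
      exists_errCount_eq_optRepl (E.filter fun e => ¬ e f ≤ t) lab w hiw
    have h := (hu.node_left w).trans (hw.node_right u')
    rw [Nat.add_sub_cancel' hik] at h
    rw [← hu_opt, ← hw_opt, ← errCount_node]
    exact h.optRepl_le
  · obtain ⟨T', h, hopt⟩ := exists_errCount_eq_optRepl E lab (.node f t u w) hk.le
    rw [← hopt]
    rcases h.of_node with ⟨hk', -⟩ | ⟨i, j, u', w', rfl, rfl, hu, hw⟩
    · exact absurd hk' hk.ne
    · have hi := hu.add_innerCount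
      have hj := hw.add_innerCount
      rw [errCount_node]
      refine le_trans (Nat.sInf_le ⟨i, by omega, by omega, by omega, rfl⟩) ?_
      rw [Nat.add_sub_cancel_left]
      exact add_le_add hu.optRepl_le hw.optRepl_le

end Replacement

/-- The dynamic programming recurrence for optimal subtree
replacement: (i) at a leaf `v` of `T`, `opt(v,0)` is the number of examples
of `E[T,v]` whose label differs from the label of `v`; (ii) at an inner node `v`
with children `u` (left) and `w` (right), `opt(v, s_v) = t_v`, and for `k' < s_v`,
`opt(v,k')` is the minimum of `opt(u,k*) + opt(w,k'-k*)` over all `k*` with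
`0 ≤ k* ≤ k'`, `k* ≤ s_u` and `k' - k* ≤ s_w`. -/
theorem stmt2 {d : ℕ} (E : Finset (Fin d → ℝ)) (lab : (Fin d → ℝ) → Label)
    (T : DTree (Fin d)) :
    (∀ (v : List Bool) (c : Label), T.subtreeAt v = some (.leaf c) →
      optRepl (reach E T v) lab (.leaf c) 0
        = ((reach E T v).filter fun e => lab e ≠ c).card)
    ∧ (∀ (v : List Bool) (f : Fin d) (t : ℝ) (u w : DTree (Fin d)),
        T.subtreeAt v = some (.node f t u w) →
        (optRepl (reach E T v) lab (.node f t u w) ((DTree.node f t u w).innerCount)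
            = min (((reach E T v).filter fun e => lab e = Label.blue).card)
                  (((reach E T v).filter fun e => lab e = Label.red).card))
        ∧ ∀ k' < (DTree.node f t u w).innerCount,
            optRepl (reach E T v) lab (.node f t u w) k'
              = sInf {x | ∃ ks, ks ≤ k' ∧ ks ≤ u.innerCount ∧ k' - ks ≤ w.innerCount ∧
                  x = optRepl (reach E T (v ++ [false])) lab u ks
                    + optRepl (reach E T (v ++ [true])) lab w (k' - ks)}) := by
  refine ⟨fun v c _ => optRepl_leaf _ lab c, fun v f t u w hv =>
    ⟨optRepl_node_innerCount _ lab f t u w, fun k' hk' => ?_⟩⟩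
  rw [reach_concat_false E hv, reach_concat_true E hv]
  exact optRepl_node_of_lt _ lab f t u w hk'
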